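/- Let n ≥ 1 and λ, μ ∈ ℂ, and weight the vertices of the cycle C_{2n} by assigning λ_i = λ when i is even and λ_i = μ when i is odd. Let α, β ∈ ℂ be the two roots (with multiplicity) of the quadratic X² − (λ + μ + 1)·X + λμ. Then the multivariate independence polynomial of C_{2n} with these weights equals α^n + β^n. -/

import Mathlib

attribute [local instance] Classical.propDecidable

/-- Multivariate independence polynomial of the induced subgraph `G[W]`:
the sum over all independent sets `S ⊆ W` of `∏ v ∈ S, lam v`. -/
noncomputable def indepPolyOn {V : Type*} [Fintype V] (G : SimpleGraph V)
    (lam : V → ℂ) (W : Finset V) : ℂ :=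
  ∑ S ∈ W.powerset, if (∀ u ∈ S, ∀ v ∈ S, ¬ G.Adj u v) then ∏ v ∈ S, lam v else 0

/-- Multivariate independence polynomial `Z_{G,λ}`. -/
noncomputable def indepPoly {V : Type*} [Fintype V] (G : SimpleGraph V)
    (lam : V → ℂ) : ℂ :=
  indepPolyOn G lam Finset.univ

/-- The subdivided claw `S_{t,t,t}`: three paths of length `t` sharing one common
endpoint (the vertex `none`). -/
def subdividedClaw (t : ℕ) : SimpleGraph (Option (Fin 3 × Fin t)) :=
  SimpleGraph.fromRel (fun a b =>
    match a, b with
    | none, some (_, j) => (j : ℕ) = 0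
    | some (i, j), some (i', j') => i = i' ∧ (j : ℕ) + 1 = (j' : ℕ)
    | _, _ => False)

/-- The open parabolic region `R(k) = {z : (Im z)² < (1/k)·Re z + 1/(4k²)}`. -/
def parabR (k : ℝ) : Set ℂ := {z : ℂ | z.im ^ 2 < z.re / k + 1 / (4 * k ^ 2)}

/-- The closed halfplane `H(t) = {z : Re z ≥ t}`. -/
def halfH (t : ℝ) : Set ℂ := {z : ℂ | t ≤ z.re}


/-- The cycle on vertex set `{0, …, m−1}`, `i` adjacent to `i ± 1 (mod m)`. -/
def cycG (m : ℕ) : SimpleGraph (Fin m) :=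
  SimpleGraph.fromRel (fun i j => ((i : ℕ) + 1) % m = (j : ℕ))

/-- Summand of the transfer-matrix sum with prescribed end states. -/
noncomputable def trG (w : ℕ → ℂ) (m : ℕ) (a b : Prop) (S : Finset ℕ) : ℂ :=
  if (∀ i ∈ S, i + 1 ∉ S) ∧ (0 ∈ S ↔ a) ∧ (m ∈ S ↔ b) then ∏ v ∈ S, w v else 0

/-- Path sum over `{0, …, m}` with prescribed end states. -/
noncomputable def trF (w : ℕ → ℂ) (m : ℕ) (a b : Prop) : ℂ :=
  ∑ S ∈ (Finset.range (m + 1)).powerset, trG w m a b S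

theorem trF_zero (w : ℕ → ℂ) : trF w 0 False False = 1 ∧ trF w 0 False True = 0 ∧
    trF w 0 True False = 0 ∧ trF w 0 True True = w 0 := by
  have h : (Finset.range (0 + 1)).powerset = {∅, {0}} := by decide
  have hne : (∅ : Finset ℕ) ≠ {0} := by decide
  unfold trF
  rw [h]
  simp only [Finset.sum_pair hne]
  simp [trG]

theorem trF_succ_false (w : ℕ → ℂ) (m : ℕ) (a : Prop) :
    trF w (m + 1) a False = trF w m a False + trF w m a True := by
  unfold trF
  rw [Finset.range_add_one (n := m + 1), Finset.sum_powerset_insert (by simp),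
    ← Finset.sum_add_distrib, ← Finset.sum_add_distrib]
  refine Finset.sum_congr rfl fun S hS => ?_
  have hm : m + 1 ∉ S := fun h => by
    have := Finset.mem_range.1 (Finset.mem_powerset.1 hS h)
    omega
  by_cases h1 : m ∈ S <;> simp [trG, hm, h1]

theorem trF_succ_true (w : ℕ → ℂ) (m : ℕ) (a : Prop) :
    trF w (m + 1) a True = w (m + 1) * trF w m a False := by
  unfold trF
  rw [Finset.range_add_one (n := m + 1), Finset.sum_powerset_insert (by simp),
    ← Finset.sum_add_distrib, Finset.mul_sum]
  refine Finset.sum_congr rfl fun S hS => ?_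
  have hlt : ∀ i ∈ S, i < m + 1 := fun i h =>
    Finset.mem_range.1 (Finset.mem_powerset.1 hS h)
  have hm : m + 1 ∉ S := fun h => by have := hlt _ h; omega
  have e : ((∀ i ∈ insert (m + 1) S, i + 1 ∉ insert (m + 1) S) ∧ (0 ∈ insert (m + 1) S ↔ a) ∧
      (m + 1 ∈ insert (m + 1) S ↔ True)) ↔
      ((∀ i ∈ S, i + 1 ∉ S) ∧ (0 ∈ S ↔ a) ∧ (m ∈ S ↔ False)) := by
    have h0 : 0 ∈ insert (m + 1) S ↔ 0 ∈ S := by simp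
    rw [h0]
    constructor
    · rintro ⟨h1, h2, -⟩
      refine ⟨fun i hi hi' => h1 i (by simp [hi]) (by simp [hi']), h2, ?_⟩
      simp only [iff_false]
      exact fun h => h1 m (by simp [h]) (by simp)
    · rintro ⟨h1, h2, h3⟩
      refine ⟨fun i hi hi' => ?_, h2, by simp⟩
      simp only [iff_false] at h3
      rw [Finset.mem_insert] at hi hi'
      rcases hi with rfl | hi
      · rcases hi' with h | h
        · omega
        · have := hlt _ h
          omega
      · rcases hi' with h | h
        · have : i = m := by omega
          exact h3 (this ▸ hi)
        · exact h1 i hi h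
  have z : trG w (m + 1) a True S = 0 := by simp [trG, hm]
  rw [z, zero_add]
  unfold trG
  simp only [e, Finset.prod_insert hm, mul_ite, mul_zero]

theorem cyc_eq (m : ℕ) (w : ℕ → ℂ) :
    indepPoly (cycG (m + 2)) (fun i : Fin (m + 2) => w i) =
      trF w (m + 1) False False + trF w (m + 1) False True + trF w (m + 1) True False := by
  unfold trF indepPoly indepPolyOn
  rw [← Finset.sum_add_distrib, ← Finset.sum_add_distrib]
  refine Finset.sum_bij (fun S _ => S.map Fin.valEmbedding) ?_ ?_ ?_ ?_
  · intro S _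
    rw [Finset.mem_powerset]
    intro x hx
    simp only [Finset.mem_map, Fin.valEmbedding_apply] at hx
    obtain ⟨y, -, rfl⟩ := hx
    exact Finset.mem_range.2 y.2
  · intro S _ T _ h
    exact Finset.map_injective _ h
  · intro T hT
    rw [Finset.mem_powerset] at hT
    refine ⟨Finset.univ.filter (fun i : Fin (m + 2) => (i : ℕ) ∈ T), by simp, ?_⟩
    ext x
    simp only [Finset.mem_map, Finset.mem_filter, Finset.mem_univ, true_and,
      Fin.valEmbedding_apply]
    constructor
    · rintro ⟨y, hy, rfl⟩
      exact hy
    · intro hx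
      exact ⟨⟨x, Finset.mem_range.1 (hT hx)⟩, hx, rfl⟩
  · intro S _
    have hmem : ∀ x (hx : x < m + 2), x ∈ S.map Fin.valEmbedding ↔ (⟨x, hx⟩ : Fin (m + 2)) ∈ S := by
      intro x hx
      simp only [Finset.mem_map, Fin.valEmbedding_apply]
      constructor
      · rintro ⟨y, hy, rfl⟩
        exact hy
      · intro h
        exact ⟨_, h, rfl⟩
    have hlt : ∀ x ∈ S.map Fin.valEmbedding, x < m + 2 := by
      intro x hx
      simp only [Finset.mem_map, Fin.valEmbedding_apply] at hx
      obtain ⟨y, -, rfl⟩ := hx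
      exact y.2
    have hprod : ∏ v ∈ S, w v = ∏ v ∈ S.map Fin.valEmbedding, w v := by simp
    rw [hprod]
    have e : (∀ u ∈ S, ∀ v ∈ S, ¬ (cycG (m + 2)).Adj u v) ↔
        (∀ i ∈ S.map Fin.valEmbedding, i + 1 ∉ S.map Fin.valEmbedding) ∧
        ¬ (0 ∈ S.map Fin.valEmbedding ∧ m + 1 ∈ S.map Fin.valEmbedding) := by
      constructor
      · intro h
        refine ⟨fun i hi hi' => ?_, fun ⟨h0, h1⟩ => ?_⟩
        · have l := hlt _ hi'
          refine h _ ((hmem i (by omega)).1 hi) _ ((hmem _ l).1 hi') ?_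
          rw [cycG, SimpleGraph.fromRel_adj]
          refine ⟨by simp, Or.inl ?_⟩
          exact Nat.mod_eq_of_lt l
        · refine h _ ((hmem _ (by omega)).1 h1) _ ((hmem _ (by omega)).1 h0) ?_
          rw [cycG, SimpleGraph.fromRel_adj]
          refine ⟨by simp, Or.inl ?_⟩
          simp
      · rintro ⟨h1, h2⟩
        have key : ∀ u ∈ S, ∀ v ∈ S, ((u : ℕ) + 1) % (m + 2) ≠ (v : ℕ) := by
          intro u hu v hv huv
          have hu' := (hmem u u.2).2 hu
          have hv' := (hmem v v.2).2 hv
          by_cases hl : (u : ℕ) + 1 < m + 2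
          · rw [Nat.mod_eq_of_lt hl] at huv
            exact h1 _ hu' (huv ▸ hv')
          · have hu2 : (u : ℕ) = m + 1 := by have := u.2; omega
            rw [hu2] at huv hu'
            rw [Nat.mod_self] at huv
            exact h2 ⟨huv ▸ hv', hu'⟩
        intro u hu v hv hadj
        rw [cycG, SimpleGraph.fromRel_adj] at hadj
        rcases hadj.2 with h | h
        · exact key u hu v hv h
        · exact key v hv u hu h
    simp only [e]
    generalize S.map Fin.valEmbedding = T
    unfold trG
    by_cases a : 0 ∈ T <;> by_cases b : m + 1 ∈ T <;> simp [a, b]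

/-- weight the cycle `C_{2n}` by `λ` on even vertices and `μ` on
odd vertices.  If `α, β` are the two roots (with multiplicity) of
`X² − (λ + μ + 1)X + λμ`, then the independence polynomial equals `αⁿ + βⁿ`. -/
theorem stmt16 (n : ℕ) (hn : 1 ≤ n) (lam mu α β : ℂ)
    (hsum : α + β = lam + mu + 1) (hprod : α * β = lam * mu) :
    indepPoly (cycG (2 * n))
      (fun i : Fin (2 * n) => if (i : ℕ) % 2 = 0 then lam else mu) =
    α ^ n + β ^ n := by
  obtain ⟨k, rfl⟩ : ∃ k, n = k + 1 := ⟨n - 1, by omega⟩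
  set w : ℕ → ℂ := fun i => if i % 2 = 0 then lam else mu with hw
  have hc := cyc_eq (2 * k) w
  have e1 : indepPoly (cycG (2 * (k + 1)))
      (fun i : Fin (2 * (k + 1)) => if (i : ℕ) % 2 = 0 then lam else mu) =
      indepPoly (cycG (2 * k + 2)) (fun i : Fin (2 * k + 2) => w i) := rfl
  rw [e1, hc]
  clear e1 hc hn
  have w0 : ∀ j, w (2 * j) = lam := fun j => by simp [hw]
  have w1 : ∀ j, w (2 * j + 1) = mu := fun j => by
    have : (2 * j + 1) % 2 = 1 := by omega
    simp [hw, this]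
  have step : ∀ (a : Prop) (j : ℕ),
      trF w (2 * (j + 1) + 1) a False =
        (1 + lam) * trF w (2 * j + 1) a False + trF w (2 * j + 1) a True ∧
      trF w (2 * (j + 1) + 1) a True =
        mu * (trF w (2 * j + 1) a False + trF w (2 * j + 1) a True) := by
    intro a j
    have h1 : trF w (2 * (j + 1)) a False =
        trF w (2 * j + 1) a False + trF w (2 * j + 1) a True :=
      trF_succ_false w (2 * j + 1) a
    have h2 : trF w (2 * (j + 1)) a True = lam * trF w (2 * j + 1) a False := by
      rw [← w0 (j + 1)]
      exact trF_succ_true w (2 * j + 1) a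
    rw [trF_succ_false w (2 * (j + 1)), trF_succ_true w (2 * (j + 1)), h1, h2, w1]
    constructor <;> ring
  obtain ⟨z1, z2, z3, z4⟩ := trF_zero w
  have b1 : trF w (2 * 0 + 1) False False = 1 := by
    rw [trF_succ_false, Nat.mul_zero, z1, z2]; ring
  have b2 : trF w (2 * 0 + 1) False True = mu := by
    rw [trF_succ_true, w1, Nat.mul_zero, z1]; ring
  have b3 : trF w (2 * 0 + 1) True False = lam := by
    rw [trF_succ_false, Nat.mul_zero, z3, z4, ← w0 0]; ring
  have b4 : trF w (2 * 0 + 1) True True = 0 := by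
    rw [trF_succ_true, Nat.mul_zero, z3]; ring
  induction k using Nat.twoStepInduction with
  | zero => rw [b1, b2, b3]; linear_combination -hsum
  | one =>
    rw [(step False 0).1, (step False 0).2, (step True 0).1, b1, b2, b3, b4]
    linear_combination -(α + β + lam + mu + 1) * hsum + 2 * hprod
  | more j ih1 ih2 =>
    have r : α ^ (j + 1 + 1 + 1) + β ^ (j + 1 + 1 + 1) =
        (lam + mu + 1) * (α ^ (j + 1 + 1) + β ^ (j + 1 + 1)) -
          lam * mu * (α ^ (j + 1) + β ^ (j + 1)) := by
      rw [← hsum, ← hprod]; ring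
    rw [show j + 2 + 1 = j + 1 + 1 + 1 from rfl, r, ← ih1, ← ih2]
    rw [(step False (j + 1)).1, (step False (j + 1)).2, (step True (j + 1)).1,
      (step False j).1, (step False j).2, (step True j).1, (step True j).2]
    ring
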